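/- Let N ≥ 1, p, q ≥ 0, r₁, r₂ ∈ [1,∞), and set P = N(p/r₂ − 1/r₁), Q = N(q/r₁ − 1/r₂). Assume max{P,Q} > 0. Then there exist positive constants γ₃, T₂ and C (independent of the data) with the following property: for all nonnegative measurable u₀, v₀ on ℝ^N, setting W₀ = u₀^{r₁} + v₀^{r₂}, if S(t)W₀ ∈ L^∞(ℝ^N) for all t > 0 and ∫₀^T ‖S(s)W₀‖_{L^∞(ℝ^N)}^{max{P,Q}/N} ds ≤ γ₃ for some T > 0, then the system (S) possesses a solution (u,v) on ℝ^N × (0, min{T, T₂}] satisfying 0 ≤ u(x,t)^{r₁} + v(x,t)^{r₂} ≤ C [S(t)W₀](x) + C for a.e. x ∈ ℝ^N and all t ∈ (0, min{T, T₂}]. -/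

import Mathlib

open MeasureTheory ENNReal Filter

noncomputable section

/-- Euclidean space `ℝ^N`. -/
abbrev Euc (N : ℕ) := EuclideanSpace ℝ (Fin N)

/-- The heat semigroup applied to a (nonnegative) function `φ` on `ℝ^N`, with values in `[0,∞]`:
`[S(t)φ](x) = ∫ (4πt)^{-N/2} exp(-|x-y|²/(4t)) φ(y) dy`. -/
noncomputable def heatS (N : ℕ) (t : ℝ) (φ : Euc N → ℝ) (x : Euc N) : ℝ≥0∞ :=
  ∫⁻ y, ENNReal.ofReal
    ((4 * Real.pi * t) ^ (-(N : ℝ) / 2) * Real.exp (-‖x - y‖ ^ 2 / (4 * t)) * φ y)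

/-- The `L^∞` norm of `S(t)φ` on `ℝ^N`. -/
noncomputable def heatSup (N : ℕ) (t : ℝ) (φ : Euc N → ℝ) : ℝ≥0∞ :=
  essSup (heatS N t φ) volume

/-- The `L^{r,∞}(E)` quasinorm: for `1 < r < ∞` it is
`sup_{λ>0} λ |{x ∈ E : |f x| > λ}|^{1/r}`; for `r = 1` (resp. `r = ∞`)
it is the usual `L¹(E)` (resp. `L^∞(E)`) norm. -/
noncomputable def wnorm (N : ℕ) (r : ℝ≥0∞) (f : Euc N → ℝ) (E : Set (Euc N)) : ℝ≥0∞ :=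
  if r = 1 then ∫⁻ x in E, ENNReal.ofReal |f x|
  else if r = ⊤ then essSup (fun x => ENNReal.ofReal |f x|) (volume.restrict E)
  else ⨆ (l : ℝ) (_ : 0 < l), ENNReal.ofReal l * (volume {x ∈ E | l < |f x|}) ^ (1 / r.toReal)

/-- The uniformly local quasinorm `|||f|||_{r,ρ} = sup_x ‖f‖_{L^{r,∞}(B(x,ρ))}`
(for `r = ∞` it is the `L^∞(ℝ^N)` norm). -/
noncomputable def ulocNorm (N : ℕ) (r : ℝ≥0∞) (ρ : ℝ) (f : Euc N → ℝ) : ℝ≥0∞ :=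
  if r = ⊤ then essSup (fun x => ENNReal.ofReal |f x|) volume
  else ⨆ x : Euc N, wnorm N r f (Metric.ball x ρ)

/-- `u ∈ L^∞(τ, T-τ; L^∞(ℝ^N))` for every `τ ∈ (0, T/2)`. -/
def LocBdd (N : ℕ) (T : ℝ≥0∞) (u : Euc N → ℝ → ℝ) : Prop :=
  ∀ τ : ℝ, 0 < τ → ENNReal.ofReal (2 * τ) < T →
    ∃ M : ℝ, ∀ t : ℝ, τ ≤ t → ENNReal.ofReal (t + τ) ≤ T →
      ∀ᵐ x ∂(volume : Measure (Euc N)), |u x t| ≤ M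

/-- Regularity requirements on a pair `(u,v)`: nonnegativity, joint measurability and
uniform boundedness away from `t = 0` and `t = T`. -/
def PairRegular (N : ℕ) (T : ℝ≥0∞) (u v : Euc N → ℝ → ℝ) : Prop :=
  (∀ x t, 0 ≤ u x t) ∧ (∀ x t, 0 ≤ v x t) ∧
  Measurable (Function.uncurry u) ∧ Measurable (Function.uncurry v) ∧
  LocBdd N T u ∧ LocBdd N T v

/-- The Duhamel identities for the system (S) `∂ₜu = Δu + v^p`, `∂ₜv = Δv + u^q` at time `t`. -/
def DuhamelSys (N : ℕ) (p q : ℝ) (u₀ v₀ : Euc N → ℝ) (u v : Euc N → ℝ → ℝ) (t : ℝ) : Prop :=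
  (∀ᵐ x ∂(volume : Measure (Euc N)), ENNReal.ofReal (u x t) =
      heatS N t u₀ x + ∫⁻ s in Set.Ioo 0 t, heatS N (t - s) (fun y => v y s ^ p) x) ∧
  (∀ᵐ x ∂(volume : Measure (Euc N)), ENNReal.ofReal (v x t) =
      heatS N t v₀ x + ∫⁻ s in Set.Ioo 0 t, heatS N (t - s) (fun y => u y s ^ q) x)

/-- The Duhamel inequalities (`≥`, with finite left-hand side) for the system (S) at time `t`. -/
def DuhamelSuperSys (N : ℕ) (p q : ℝ) (u₀ v₀ : Euc N → ℝ) (u v : Euc N → ℝ → ℝ) (t : ℝ) : Prop :=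
  (∀ᵐ x ∂(volume : Measure (Euc N)),
      heatS N t u₀ x + (∫⁻ s in Set.Ioo 0 t, heatS N (t - s) (fun y => v y s ^ p) x) ≤
        ENNReal.ofReal (u x t)) ∧
  (∀ᵐ x ∂(volume : Measure (Euc N)),
      heatS N t v₀ x + (∫⁻ s in Set.Ioo 0 t, heatS N (t - s) (fun y => u y s ^ q) x) ≤
        ENNReal.ofReal (v x t))

/-- `(u,v)` is a solution of the system (S) on `ℝ^N × (0,T)`. -/
def IsSolSys (N : ℕ) (p q : ℝ) (u₀ v₀ : Euc N → ℝ) (T : ℝ≥0∞) (u v : Euc N → ℝ → ℝ) : Prop :=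
  PairRegular N T u v ∧
  ∀ t : ℝ, 0 < t → ENNReal.ofReal t < T → DuhamelSys N p q u₀ v₀ u v t

/-- `(u,v)` is a supersolution of the system (S) on `ℝ^N × (0,T)`. -/
def IsSuperSys (N : ℕ) (p q : ℝ) (u₀ v₀ : Euc N → ℝ) (T : ℝ≥0∞) (u v : Euc N → ℝ → ℝ) : Prop :=
  PairRegular N T u v ∧
  ∀ t : ℝ, 0 < t → ENNReal.ofReal t < T → DuhamelSuperSys N p q u₀ v₀ u v t

/-- `(u,v)` is the minimal solution of the system (S) on `ℝ^N × (0,T)`. -/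
def IsMinSolSys (N : ℕ) (p q : ℝ) (u₀ v₀ : Euc N → ℝ) (T : ℝ≥0∞)
    (u v : Euc N → ℝ → ℝ) : Prop :=
  IsSolSys N p q u₀ v₀ T u v ∧
  ∀ u' v' : Euc N → ℝ → ℝ, IsSolSys N p q u₀ v₀ T u' v' →
    ∀ t : ℝ, 0 < t → ENNReal.ofReal t < T →
      (∀ᵐ x ∂(volume : Measure (Euc N)), u x t ≤ u' x t) ∧
      (∀ᵐ x ∂(volume : Measure (Euc N)), v x t ≤ v' x t)

/-- Regularity requirements on a scalar function `w`. -/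
def ScalarRegular (N : ℕ) (T : ℝ≥0∞) (w : Euc N → ℝ → ℝ) : Prop :=
  (∀ x t, 0 ≤ w x t) ∧ Measurable (Function.uncurry w) ∧ LocBdd N T w

/-- The Duhamel identity for the scalar problem (E) `∂ₜw = Δw + α w^A + β w^B` at time `t`. -/
def DuhamelScalar (N : ℕ) (α β A B : ℝ) (w₀ : Euc N → ℝ) (w : Euc N → ℝ → ℝ) (t : ℝ) : Prop :=
  ∀ᵐ x ∂(volume : Measure (Euc N)), ENNReal.ofReal (w x t) =
    heatS N t w₀ x +
      ∫⁻ s in Set.Ioo 0 t, heatS N (t - s) (fun y => α * w y s ^ A + β * w y s ^ B) x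

/-- The Duhamel inequality (`≥`, with finite left-hand side) for the scalar problem (E). -/
def DuhamelSuperScalar (N : ℕ) (α β A B : ℝ) (w₀ : Euc N → ℝ) (w : Euc N → ℝ → ℝ)
    (t : ℝ) : Prop :=
  ∀ᵐ x ∂(volume : Measure (Euc N)),
    heatS N t w₀ x +
        (∫⁻ s in Set.Ioo 0 t, heatS N (t - s) (fun y => α * w y s ^ A + β * w y s ^ B) x) ≤
      ENNReal.ofReal (w x t)

/-- `w` is a solution of the scalar problem (E) on `ℝ^N × (0,T)`. -/
def IsSolScalar (N : ℕ) (α β A B : ℝ) (w₀ : Euc N → ℝ) (T : ℝ≥0∞)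
    (w : Euc N → ℝ → ℝ) : Prop :=
  ScalarRegular N T w ∧
  ∀ t : ℝ, 0 < t → ENNReal.ofReal t < T → DuhamelScalar N α β A B w₀ w t

/-- `w` is a supersolution of the scalar problem (E) on `ℝ^N × (0,T)`. -/
def IsSuperScalar (N : ℕ) (α β A B : ℝ) (w₀ : Euc N → ℝ) (T : ℝ≥0∞)
    (w : Euc N → ℝ → ℝ) : Prop :=
  ScalarRegular N T w ∧
  ∀ t : ℝ, 0 < t → ENNReal.ofReal t < T → DuhamelSuperScalar N α β A B w₀ w t

/-- The Duhamel identities for the strongly coupled system (SC)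
`∂ₜu = Δu + u^{p₁} v^{p₂}`, `∂ₜv = Δv + u^{q₁} v^{q₂}` at time `t`. -/
def DuhamelSC (N : ℕ) (p₁ p₂ q₁ q₂ : ℝ) (u₀ v₀ : Euc N → ℝ) (u v : Euc N → ℝ → ℝ)
    (t : ℝ) : Prop :=
  (∀ᵐ x ∂(volume : Measure (Euc N)), ENNReal.ofReal (u x t) =
      heatS N t u₀ x +
        ∫⁻ s in Set.Ioo 0 t, heatS N (t - s) (fun y => u y s ^ p₁ * v y s ^ p₂) x) ∧
  (∀ᵐ x ∂(volume : Measure (Euc N)), ENNReal.ofReal (v x t) =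
      heatS N t v₀ x +
        ∫⁻ s in Set.Ioo 0 t, heatS N (t - s) (fun y => u y s ^ q₁ * v y s ^ q₂) x)

/-- `(u,v)` is a solution of the strongly coupled system (SC) on `ℝ^N × (0,T)`. -/
def IsSolSC (N : ℕ) (p₁ p₂ q₁ q₂ : ℝ) (u₀ v₀ : Euc N → ℝ) (T : ℝ≥0∞)
    (u v : Euc N → ℝ → ℝ) : Prop :=
  PairRegular N T u v ∧
  ∀ t : ℝ, 0 < t → ENNReal.ofReal t < T → DuhamelSC N p₁ p₂ q₁ q₂ u₀ v₀ u v t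

/-! The nonlinear system is solved by Picard iteration from zero, which increases to a fixed point
of the Duhamel map and stays below every supersolution. The supersolution is
`(w ^ (1/r₁), w ^ (1/r₂))` with `w = D (S(t)W₀ + 1)`: the semigroup property gives
`S(t-s) w(s) = w(t)`, Jensen's inequality gives `S(t-s) w(s) ^ a ≤ w(t) ^ a` for `0 < a ≤ 1`, and
the excess power `w ^ m` of the nonlinear term is replaced by its supremum, whose time integral is
small by hypothesis. -/

section ENNRealInequalities

lemma rpow_iSup_of_nonneg {ι : Type*} [Nonempty ι] {p : ℝ} (hp : 0 ≤ p) (f : ι → ℝ≥0∞) :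
    (⨆ i, f i) ^ p = ⨆ i, f i ^ p := by
  rcases hp.eq_or_lt with rfl | hp
  · simp
  · exact (ENNReal.orderIsoRpow p hp).map_iSup f

lemma add_rpow_le_two_rpow_mul_add_rpow {m : ℝ} (hm : 0 ≤ m) (x y : ℝ≥0∞) :
    (x + y) ^ m ≤ 2 ^ m * (x ^ m + y ^ m) := by
  have max_rpow_le : max x y ^ m ≤ x ^ m + y ^ m := by
    rcases le_total x y with h | h
    · simp [max_eq_right h]
    · simp [max_eq_left h]
  calc (x + y) ^ m ≤ (2 * max x y) ^ m := by
        rw [two_mul]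
        gcongr
        exacts [le_max_left _ _, le_max_right _ _]
    _ = 2 ^ m * max x y ^ m := ENNReal.mul_rpow_of_nonneg _ _ hm
    _ ≤ 2 ^ m * (x ^ m + y ^ m) := by gcongr

lemma one_le_of_one_le_rpow {a : ℝ} (ha : 0 < a) {x : ℝ≥0∞} (hx : 1 ≤ x ^ a) : 1 ≤ x := by
  rwa [← ENNReal.one_rpow a, ENNReal.rpow_le_rpow_iff ha] at hx

lemma ofReal_toReal_rpow_le {r : ℝ} (hr : 0 ≤ r) (x : ℝ≥0∞) :
    ENNReal.ofReal (x.toReal ^ r) ≤ x ^ r := by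
  rw [← ENNReal.ofReal_rpow_of_nonneg ENNReal.toReal_nonneg hr]
  exact ENNReal.rpow_le_rpow ENNReal.ofReal_toReal_le hr

lemma ofReal_le_ofReal_rpow_one_div {r x y : ℝ} (hr : 0 < r) (hx : 0 ≤ x) (hxy : x ^ r ≤ y) :
    ENNReal.ofReal x ≤ ENNReal.ofReal y ^ (1 / r) := by
  have hpow : 0 ≤ x ^ r := Real.rpow_nonneg hx r
  rw [ENNReal.ofReal_rpow_of_nonneg (hpow.trans hxy) (by positivity)]
  refine ENNReal.ofReal_le_ofReal ?_
  calc x = (x ^ r) ^ (1 / r) := by rw [one_div, Real.rpow_rpow_inv hx hr.ne']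
    _ ≤ y ^ (1 / r) := by gcongr

lemma two_le_ofReal_two_rpow_rpow_one_div {r c : ℝ} (hr : 0 < r) (hrc : r ≤ c) :
    2 ≤ ENNReal.ofReal (2 ^ c) ^ (1 / r) := by
  rw [← ENNReal.ofReal_ofNat 2, ENNReal.ofReal_rpow_of_pos (by positivity),
    ← Real.rpow_mul zero_le_two]
  refine ENNReal.ofReal_le_ofReal (Real.self_le_rpow_of_one_le one_le_two ?_)
  rwa [mul_one_div, one_le_div hr]

lemma lintegral_rpow_le_rpow_lintegral {α : Type*} [MeasurableSpace α] (μ : Measure α)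
    [IsProbabilityMeasure μ] {a : ℝ} (ha : 0 < a) (ha1 : a ≤ 1) {f : α → ℝ≥0∞}
    (hf : AEMeasurable f μ) : ∫⁻ x, f x ^ a ∂μ ≤ (∫⁻ x, f x ∂μ) ^ a := by
  have h := eLpNorm'_le_eLpNorm'_of_exponent_le ha ha1 μ hf.aestronglyMeasurable
  simp only [eLpNorm'_eq_lintegral_enorm, enorm_eq_self, ENNReal.rpow_one, one_div, inv_one] at h
  rwa [ENNReal.rpow_inv_le_iff ha] at h

lemma ofReal_mul_setLIntegral_add_one_le_half {A T : ℝ} (hA : 0 < A) {h : ℝ → ℝ≥0∞}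
    (hh : ∫⁻ s in Set.Ioo 0 T, h s ≤ ENNReal.ofReal (A⁻¹ / 4)) :
    ENNReal.ofReal A * ∫⁻ s in Set.Ioo 0 (min T (A⁻¹ / 4)), (h s + 1) ≤ 2⁻¹ := by
  have integral_le : ∫⁻ s in Set.Ioo 0 (min T (A⁻¹ / 4)), (h s + 1) ≤
      ENNReal.ofReal (A⁻¹ / 4) + ENNReal.ofReal (A⁻¹ / 4) := by
    rw [lintegral_add_right _ measurable_const, setLIntegral_one, Real.volume_Ioo, sub_zero]
    gcongr
    · exact (lintegral_mono_set (Set.Ioo_subset_Ioo_right (min_le_left _ _))).trans hh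
    · exact min_le_right _ _
  calc _ ≤ ENNReal.ofReal A * (ENNReal.ofReal (A⁻¹ / 4) + ENNReal.ofReal (A⁻¹ / 4)) := by gcongr
    _ = ENNReal.ofReal (A * (A⁻¹ / 4 + A⁻¹ / 4)) := by
      rw [← ENNReal.ofReal_add (by positivity) (by positivity), ENNReal.ofReal_mul hA.le]
    _ = ENNReal.ofReal 2⁻¹ := by congr 1; field_simp; norm_num
    _ ≤ 2⁻¹ := by rw [ENNReal.ofReal_inv_of_pos two_pos, ENNReal.ofReal_ofNat]

lemma ofReal_toReal_rpow_add_toReal_rpow_le_two_mul {r₁ r₂ : ℝ} (hr₁ : 0 ≤ r₁) (hr₂ : 0 ≤ r₂)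
    {x y w : ℝ≥0∞} (hx : x ^ r₁ ≤ w) (hy : y ^ r₂ ≤ w) :
    ENNReal.ofReal (x.toReal ^ r₁ + y.toReal ^ r₂) ≤ 2 * w := by
  rw [two_mul]
  exact ENNReal.ofReal_add_le.trans (add_le_add ((ofReal_toReal_rpow_le hr₁ x).trans hx)
    ((ofReal_toReal_rpow_le hr₂ y).trans hy))

end ENNRealInequalities

section HeatKernel

variable {E : Type*} [NormedAddCommGroup E] [InnerProductSpace ℝ E]

/-- The Gauss–Weierstrass kernel `(4πt)^{-n/2} exp(-|z|²/(4t))` of an `n`-dimensional Euclidean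
space, with values in `[0,∞]` so that it can be integrated against arbitrary nonnegative data. -/
def heatKernel (t : ℝ) (z : E) : ℝ≥0∞ :=
  ENNReal.ofReal
    ((4 * Real.pi * t) ^ (-(Module.finrank ℝ E : ℝ) / 2) * Real.exp (-‖z‖ ^ 2 / (4 * t)))

lemma heatKernel_ne_top (t : ℝ) (z : E) : heatKernel t z ≠ ⊤ :=
  ENNReal.ofReal_ne_top

lemma norm_sq_div_add_norm_sub_sq_div {s σ : ℝ} (hs : 0 < s) (hσ : 0 < σ) (x y : E) :
    ‖y‖ ^ 2 / s + ‖x - y‖ ^ 2 / σ =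
      ‖x‖ ^ 2 / (s + σ) + ‖y - (s / (s + σ)) • x‖ ^ 2 / (s * σ / (s + σ)) := by
  rw [norm_sub_sq_real, norm_sub_sq_real, norm_smul, inner_smul_right, real_inner_comm,
    Real.norm_of_nonneg (by positivity)]
  field_simp
  ring

-- As a function of `y`, the last factor is the density of a Brownian bridge from `0` to `x`.
lemma heatKernel_mul_heatKernel_sub {s σ : ℝ} (hs : 0 < s) (hσ : 0 < σ) (x y : E) :
    heatKernel s y * heatKernel σ (x - y) =
      heatKernel (s + σ) x * heatKernel (s * σ / (s + σ)) (y - (s / (s + σ)) • x) := by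
  simp only [heatKernel]
  rw [← ENNReal.ofReal_mul (by positivity), ← ENNReal.ofReal_mul (by positivity),
    mul_mul_mul_comm _ (Real.exp (-‖y‖ ^ 2 / _)), mul_mul_mul_comm _ (Real.exp (-‖x‖ ^ 2 / _)),
    ← Real.exp_add, ← Real.exp_add,
    ← Real.mul_rpow (by positivity) (by positivity),
    ← Real.mul_rpow (by positivity) (by positivity)]
  congr 3
  · field_simp
  · simp only [div_mul_eq_div_div_swap]
    linear_combination (-1 / 4) * norm_sq_div_add_norm_sub_sq_div hs hσ x y

variable [MeasurableSpace E]

lemma measurable_heatKernel [OpensMeasurableSpace E] :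
    Measurable (Function.uncurry (heatKernel (E := E))) := by
  unfold Function.uncurry heatKernel
  fun_prop

variable [BorelSpace E]

lemma measurable_heatKernel_sub (t : ℝ) (x : E) : Measurable fun y => heatKernel t (x - y) :=
  measurable_heatKernel.comp (by fun_prop : Measurable fun y => (t, x - y))

variable [FiniteDimensional ℝ E]

lemma lintegral_heatKernel {t : ℝ} (ht : 0 < t) : ∫⁻ z : E, heatKernel t z = 1 := by
  have integral_eq_one : ∫ z : E, (4 * Real.pi * t) ^ (-(Module.finrank ℝ E : ℝ) / 2) *
      Real.exp (-‖z‖ ^ 2 / (4 * t)) = 1 := by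
    have hexp (z : E) : -‖z‖ ^ 2 / (4 * t) = -(1 / (4 * t)) * ‖z‖ ^ 2 := by ring
    simp only [hexp]
    rw [integral_const_mul, GaussianFourier.integral_rexp_neg_mul_sq_norm (by positivity),
      div_div_eq_mul_div, div_one, mul_left_comm, ← mul_assoc, ← Real.rpow_add (by positivity),
      neg_div, neg_add_cancel, Real.rpow_zero]
  simp only [heatKernel]
  rw [← ofReal_integral_eq_lintegral_ofReal (integrable_of_integral_eq_one integral_eq_one)
    (ae_of_all _ fun z => by positivity), integral_eq_one, ENNReal.ofReal_one]

lemma heatKernel_lconvolution_heatKernel {s σ : ℝ} (hs : 0 < s) (hσ : 0 < σ) :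
    (heatKernel s ⋆ₗ heatKernel σ : E → ℝ≥0∞) = heatKernel (s + σ) := by
  ext x
  simp only [lconvolution_def, neg_add_eq_sub, heatKernel_mul_heatKernel_sub hs hσ]
  rw [lintegral_const_mul' _ _ (heatKernel_ne_top _ _), lintegral_sub_right_eq_self,
    lintegral_heatKernel (by positivity), mul_one]

end HeatKernel

section HeatFlow

variable {E : Type*} [NormedAddCommGroup E] [InnerProductSpace ℝ E] [MeasurableSpace E]
  [BorelSpace E] [FiniteDimensional ℝ E]

/-- The heat semigroup `S(t)` acting on `[0,∞]`-valued functions. -/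
def heatFlow (t : ℝ) (f : E → ℝ≥0∞) (x : E) : ℝ≥0∞ :=
  ∫⁻ y, heatKernel t (x - y) * f y

lemma heatFlow_eq_lconvolution (t : ℝ) (f : E → ℝ≥0∞) : heatFlow t f = f ⋆ₗ heatKernel t := by
  ext x
  simp only [heatFlow, lconvolution_def, neg_add_eq_sub, mul_comm]

lemma heatFlow_mono_ae (t : ℝ) {f g : E → ℝ≥0∞} (h : ∀ᵐ y, f y ≤ g y) (x : E) :
    heatFlow t f x ≤ heatFlow t g x :=
  lintegral_mono_ae <| h.mono fun _ hy => by gcongr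

lemma heatFlow_congr_ae (t : ℝ) {f g : E → ℝ≥0∞} (h : ∀ᵐ y, f y = g y) (x : E) :
    heatFlow t f x = heatFlow t g x :=
  lintegral_congr_ae <| h.mono fun _ hy => by simp only [hy]

lemma heatFlow_const_mul (t : ℝ) {c : ℝ≥0∞} (hc : c ≠ ⊤) (f : E → ℝ≥0∞) (x : E) :
    heatFlow t (fun y => c * f y) x = c * heatFlow t f x := by
  simp only [heatFlow, mul_left_comm _ c]
  exact lintegral_const_mul' _ _ hc

lemma heatFlow_add_one {t : ℝ} (ht : 0 < t) (f : E → ℝ≥0∞) (x : E) :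
    heatFlow t (fun y => f y + 1) x = heatFlow t f x + 1 := by
  simp only [heatFlow, mul_add, mul_one]
  rw [lintegral_add_right _ (measurable_heatKernel_sub t x),
    lintegral_sub_left_eq_self, lintegral_heatKernel ht]

lemma measurable_heatFlow {α : Type*} [MeasurableSpace α] {τ : α → ℝ} {ξ : α → E}
    {h : α → E → ℝ≥0∞} (hτ : Measurable τ) (hξ : Measurable ξ)
    (hh : Measurable (Function.uncurry h)) :
    Measurable fun a => heatFlow (τ a) (h a) (ξ a) := by
  have hkernel : Measurable fun z : α × E => heatKernel (τ z.1) (ξ z.1 - z.2) :=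
    measurable_heatKernel.comp
      (by fun_prop : Measurable fun z : α × E => (τ z.1, ξ z.1 - z.2))
  exact (hkernel.mul hh).lintegral_prod_right'

lemma heatFlow_heatFlow {s σ : ℝ} (hs : 0 < s) (hσ : 0 < σ) {f : E → ℝ≥0∞}
    (hf : Measurable f) : heatFlow σ (heatFlow s f) = heatFlow (s + σ) f := by
  have hkernel (t : ℝ) : Measurable (heatKernel t : E → ℝ≥0∞) :=
    measurable_heatKernel.comp measurable_prodMk_left
  simp only [heatFlow_eq_lconvolution]
  rw [← lconvolution_assoc hf (hkernel s) (hkernel σ), heatKernel_lconvolution_heatKernel hs hσ]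

lemma heatFlow_rpow_le {t : ℝ} (ht : 0 < t) {a : ℝ} (ha : 0 < a) (ha1 : a ≤ 1)
    {f : E → ℝ≥0∞} (hf : Measurable f) (x : E) :
    heatFlow t (fun y => f y ^ a) x ≤ heatFlow t f x ^ a := by
  have hkernel := measurable_heatKernel_sub t x
  let μ : Measure E := volume.withDensity fun y => heatKernel t (x - y)
  have heatFlow_eq (g : E → ℝ≥0∞) (hg : Measurable g) : heatFlow t g x = ∫⁻ y, g y ∂μ :=
    (lintegral_withDensity_eq_lintegral_mul _ hkernel hg).symm
  have : IsProbabilityMeasure μ := ⟨by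
    rw [withDensity_apply _ .univ, Measure.restrict_univ, lintegral_sub_left_eq_self,
      lintegral_heatKernel ht]⟩
  rw [heatFlow_eq _ (hf.pow_const a), heatFlow_eq _ hf]
  exact lintegral_rpow_le_rpow_lintegral μ ha ha1 hf.aemeasurable

lemma heatFlow_iSup (t : ℝ) {f : ℕ → E → ℝ≥0∞} (hf : ∀ n, Measurable (f n))
    (hmono : Monotone f) (x : E) :
    heatFlow t (fun y => ⨆ n, f n y) x = ⨆ n, heatFlow t (f n) x := by
  simp only [heatFlow, ENNReal.mul_iSup]
  exact lintegral_iSup (fun n => (measurable_heatKernel_sub t x).mul (hf n))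
    fun i j hij y => mul_le_mul_right (hmono hij y) _

end HeatFlow

section Duhamel

variable {E : Type*} [NormedAddCommGroup E] [InnerProductSpace ℝ E] [MeasurableSpace E]
  [BorelSpace E] [FiniteDimensional ℝ E]

/-- Duhamel's formula: the mild solution of `∂ₜu = Δu + h` with initial value `f`. -/
def duhamel (f : E → ℝ≥0∞) (h : E → ℝ → ℝ≥0∞) (x : E) (t : ℝ) : ℝ≥0∞ :=
  heatFlow t f x + ∫⁻ s in Set.Ioo 0 t, heatFlow (t - s) (fun y => h y s) x

lemma measurable_duhamel {f : E → ℝ≥0∞} (hf : Measurable f) {h : E → ℝ → ℝ≥0∞}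
    (hh : Measurable (Function.uncurry h)) : Measurable (Function.uncurry (duhamel f h)) := by
  have hflow : Measurable fun z : E × ℝ => heatFlow z.2 f z.1 :=
    measurable_heatFlow measurable_snd measurable_fst (hf.comp measurable_snd)
  have hsource : Measurable fun w : (E × ℝ) × ℝ =>
      heatFlow (w.1.2 - w.2) (fun y => h y w.2) w.1.1 :=
    measurable_heatFlow (by fun_prop) (by fun_prop)
      (hh.comp (by fun_prop : Measurable fun v : ((E × ℝ) × ℝ) × E => (v.2, v.1.2)))
  have hdomain : MeasurableSet {w : (E × ℝ) × ℝ | w.2 ∈ Set.Ioo 0 w.1.2} :=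
    (measurableSet_lt measurable_const measurable_snd).inter
      (measurableSet_lt measurable_snd (measurable_snd.comp measurable_fst))
  refine hflow.add ?_
  simp only [← lintegral_indicator measurableSet_Ioo]
  exact (hsource.indicator hdomain).lintegral_prod_right'

lemma duhamel_mono (f : E → ℝ≥0∞) {h k : E → ℝ → ℝ≥0∞} (x : E) (t : ℝ)
    (hhk : ∀ s ∈ Set.Ioo 0 t, ∀ y, h y s ≤ k y s) : duhamel f h x t ≤ duhamel f k x t := by
  refine add_le_add le_rfl (setLIntegral_mono' measurableSet_Ioo fun s hs => ?_)
  exact heatFlow_mono_ae _ (ae_of_all _ (hhk s hs)) x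

lemma duhamel_iSup (f : E → ℝ≥0∞) {h : ℕ → E → ℝ → ℝ≥0∞}
    (hh : ∀ n, Measurable (Function.uncurry (h n))) (hmono : Monotone h) (x : E) (t : ℝ) :
    duhamel f (fun y s => ⨆ n, h n y s) x t = ⨆ n, duhamel f (h n) x t := by
  have hflow (s : ℝ) : heatFlow (t - s) (fun y => ⨆ n, h n y s) x =
      ⨆ n, heatFlow (t - s) (fun y => h n y s) x :=
    heatFlow_iSup _ (fun n => (hh n).comp measurable_prodMk_right)
      (fun _ _ hij y => hmono hij y s) x
  simp only [duhamel, hflow, ← ENNReal.add_iSup]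
  congr 1
  refine lintegral_iSup (fun n => ?_) fun i j hij s =>
    heatFlow_mono_ae _ (ae_of_all _ fun y => hmono hij y s) x
  exact measurable_heatFlow (by fun_prop) measurable_const ((hh n).comp measurable_swap)

end Duhamel

section Picard

variable {E : Type*} [NormedAddCommGroup E] [InnerProductSpace ℝ E] [MeasurableSpace E]
  [BorelSpace E] [FiniteDimensional ℝ E]

/-- The `n`-th Picard iterate, started from zero, of the first component of the system
`∂ₜu = Δu + v^p`, `∂ₜv = Δv + u^q` with initial value `(f, g)`. The system is invariant under
exchanging `(u, p, f)` with `(v, q, g)`, so the second component is `picardIterate q p g f n`. -/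
def picardIterate (p q : ℝ) (f g : E → ℝ≥0∞) : ℕ → E → ℝ → ℝ≥0∞
  | 0 => 0
  | n + 1 => duhamel f fun y s => picardIterate q p g f n y s ^ p

lemma measurable_picardIterate (p q : ℝ) {f g : E → ℝ≥0∞} (hf : Measurable f)
    (hg : Measurable g) (n : ℕ) : Measurable (Function.uncurry (picardIterate p q f g n)) := by
  induction n generalizing p q f g with
  | zero => exact measurable_const
  | succ n ih => exact measurable_duhamel hf ((ih q p hg hf).pow_const p)

lemma monotone_picardIterate {p q : ℝ} (hp : 0 ≤ p) (hq : 0 ≤ q) (f g : E → ℝ≥0∞) :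
    Monotone (picardIterate p q f g) := by
  refine monotone_nat_of_le_succ fun n => ?_
  induction n generalizing p q f g with
  | zero => exact fun _ _ => zero_le
  | succ n ih =>
    exact fun x t => duhamel_mono f x t fun s _ y => ENNReal.rpow_le_rpow (ih hq hp g f y s) hp

lemma picardIterate_le_of_supersolution {p q T : ℝ} (hp : 0 ≤ p) (hq : 0 ≤ q)
    {f g : E → ℝ≥0∞} {U V : E → ℝ → ℝ≥0∞}
    (hU : ∀ t ∈ Set.Ioc 0 T, ∀ x, duhamel f (fun y s => V y s ^ p) x t ≤ U x t)
    (hV : ∀ t ∈ Set.Ioc 0 T, ∀ x, duhamel g (fun y s => U y s ^ q) x t ≤ V x t)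
    (n : ℕ) {t : ℝ} (ht : t ∈ Set.Ioc 0 T) (x : E) : picardIterate p q f g n x t ≤ U x t := by
  induction n generalizing p q f g U V t x with
  | zero => exact zero_le
  | succ n ih =>
    refine (duhamel_mono f x t fun s hs y => ?_).trans (hU t ht x)
    exact ENNReal.rpow_le_rpow (ih hq hp hV hU ⟨hs.1, hs.2.le.trans ht.2⟩ y) hp

/-- The limit of the Picard iterates of the first component; as for `picardIterate`, the second
component is `picardLimit q p g f`. -/
def picardLimit (p q : ℝ) (f g : E → ℝ≥0∞) (x : E) (t : ℝ) : ℝ≥0∞ :=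
  ⨆ n, picardIterate p q f g n x t

lemma measurable_picardLimit (p q : ℝ) {f g : E → ℝ≥0∞} (hf : Measurable f)
    (hg : Measurable g) : Measurable (Function.uncurry (picardLimit p q f g)) :=
  Measurable.iSup fun n => measurable_picardIterate p q hf hg n

lemma picardLimit_eq_duhamel {p q : ℝ} (hp : 0 ≤ p) (hq : 0 ≤ q) {f g : E → ℝ≥0∞}
    (hf : Measurable f) (hg : Measurable g) (x : E) (t : ℝ) :
    picardLimit p q f g x t = duhamel f (fun y s => picardLimit q p g f y s ^ p) x t := by
  simp only [picardLimit, rpow_iSup_of_nonneg hp]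
  rw [duhamel_iSup f (h := fun n y s => picardIterate q p g f n y s ^ p)
    (fun n => (measurable_picardIterate q p hg hf n).pow_const p)
    fun i j hij y s => ENNReal.rpow_le_rpow (monotone_picardIterate hq hp g f hij y s) hp]
  have hmono : Monotone fun n => picardIterate p q f g n x t := fun i j hij =>
    monotone_picardIterate hp hq f g hij x t
  exact (hmono.iSup_nat_add 1).symm

end Picard

section Supersolution

variable {E : Type*} [NormedAddCommGroup E] [InnerProductSpace ℝ E] [MeasurableSpace E]
  [BorelSpace E] [FiniteDimensional ℝ E]

lemma heatFlow_rpow_le_mul_rpow {a b m σ : ℝ} (ha : 0 < a) (ha1 : a ≤ 1) (hm : 0 ≤ m)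
    (hb : b ≤ m + a) (hσ : 0 < σ) {w : E → ℝ≥0∞} (hw : Measurable w) {K : ℝ≥0∞} (hK : K ≠ ⊤)
    (one_le_w : ∀ y, 1 ≤ w y) (w_le : ∀ᵐ y, w y ≤ K) (x : E) :
    heatFlow σ (fun y => w y ^ b) x ≤ K ^ m * heatFlow σ w x ^ a := by
  have rpow_le : ∀ᵐ y, w y ^ b ≤ K ^ m * w y ^ a := by
    filter_upwards [w_le] with y hy
    calc w y ^ b ≤ w y ^ (m + a) := ENNReal.rpow_le_rpow_of_exponent_le (one_le_w y) hb
      _ = w y ^ m * w y ^ a :=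
        ENNReal.rpow_add _ _ (zero_lt_one.trans_le (one_le_w y)).ne' (ne_top_of_le_ne_top hK hy)
      _ ≤ K ^ m * w y ^ a := by gcongr
  calc heatFlow σ (fun y => w y ^ b) x
      ≤ heatFlow σ (fun y => K ^ m * w y ^ a) x := heatFlow_mono_ae σ rpow_le x
    _ = K ^ m * heatFlow σ (fun y => w y ^ a) x :=
      heatFlow_const_mul σ (ENNReal.rpow_ne_top_of_nonneg hm hK) _ x
    _ ≤ K ^ m * heatFlow σ w x ^ a := by gcongr; exact heatFlow_rpow_le hσ ha ha1 hw x

/-- The solution of the heat equation with initial value `D (F + 1)`, whose powers serve as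
supersolutions of the nonlinear system. -/
def caloricMajorant (D : ℝ≥0∞) (F : E → ℝ≥0∞) (x : E) (t : ℝ) : ℝ≥0∞ :=
  D * (heatFlow t F x + 1)

lemma one_le_caloricMajorant {D : ℝ≥0∞} (hD : 1 ≤ D) (F : E → ℝ≥0∞) (x : E) (t : ℝ) :
    1 ≤ caloricMajorant D F x t :=
  one_le_mul hD le_add_self

lemma measurable_caloricMajorant (D : ℝ≥0∞) {F : E → ℝ≥0∞} (hF : Measurable F) (t : ℝ) :
    Measurable fun x => caloricMajorant D F x t :=
  ((measurable_heatFlow (h := fun _ => F) measurable_const measurable_id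
    (hF.comp measurable_snd)).add_const 1).const_mul D

lemma caloricMajorant_le_essSup (D : ℝ≥0∞) (F : E → ℝ≥0∞) (t : ℝ) :
    ∀ᵐ x, caloricMajorant D F x t ≤ D * (essSup (heatFlow t F) volume + 1) := by
  filter_upwards [ENNReal.ae_le_essSup (heatFlow t F)] with x hx
  unfold caloricMajorant
  gcongr

lemma ae_ne_top_of_rpow_le_caloricMajorant {r : ℝ} (hr : 0 < r) {D : ℝ≥0∞} (hD : D ≠ ⊤)
    {F Z : E → ℝ≥0∞} {t : ℝ} (hfin : essSup (heatFlow t F) volume ≠ ⊤)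
    (hZ : ∀ x, Z x ^ r ≤ caloricMajorant D F x t) : ∀ᵐ x, Z x ≠ ⊤ := by
  have bound_ne_top : D * (essSup (heatFlow t F) volume + 1) ≠ ⊤ :=
    ENNReal.mul_ne_top hD (ENNReal.add_ne_top.2 ⟨hfin, ENNReal.one_ne_top⟩)
  filter_upwards [caloricMajorant_le_essSup D F t] with x hx hx_top
  refine ne_top_of_le_ne_top bound_ne_top ((hZ x).trans hx) ?_
  rw [hx_top, ENNReal.top_rpow_of_pos hr]

lemma heatFlow_caloricMajorant {D : ℝ≥0∞} (hD : D ≠ ⊤) {F : E → ℝ≥0∞} (hF : Measurable F)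
    {s t : ℝ} (hs : 0 < s) (hst : s < t) (x : E) :
    heatFlow (t - s) (fun y => caloricMajorant D F y s) x = caloricMajorant D F x t := by
  have hts : 0 < t - s := sub_pos.2 hst
  simp only [caloricMajorant]
  rw [heatFlow_const_mul _ hD, heatFlow_add_one hts, heatFlow_heatFlow hs hts hF,
    add_sub_cancel]

lemma heatFlow_le_half_caloricMajorant_rpow {a t : ℝ} (ha : 0 < a) (ha1 : a ≤ 1) (ht : 0 < t)
    {D : ℝ≥0∞} (hD : 2 ≤ D ^ a) {f F : E → ℝ≥0∞} (hF : Measurable F)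
    (hfF : ∀ y, f y ≤ F y ^ a) (x : E) :
    heatFlow t f x ≤ 2⁻¹ * caloricMajorant D F x t ^ a := by
  have flow_le : heatFlow t f x ≤ heatFlow t F x ^ a :=
    (heatFlow_mono_ae t (ae_of_all _ hfF) x).trans (heatFlow_rpow_le ht ha ha1 hF x)
  rw [← ENNReal.div_eq_inv_mul, ENNReal.le_div_iff_mul_le (by simp) (by simp), mul_comm]
  calc 2 * heatFlow t f x ≤ D ^ a * heatFlow t F x ^ a := by gcongr
    _ = (D * heatFlow t F x) ^ a := (ENNReal.mul_rpow_of_nonneg _ _ ha.le).symm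
    _ ≤ caloricMajorant D F x t ^ a := by
      unfold caloricMajorant
      gcongr
      exact le_self_add

lemma mul_add_one_rpow_le {m : ℝ} (hm : 0 ≤ m) (D M : ℝ≥0∞) :
    (D * (M + 1)) ^ m ≤ (2 * D) ^ m * (M ^ m + 1) := by
  calc (D * (M + 1)) ^ m = D ^ m * (M + 1) ^ m := ENNReal.mul_rpow_of_nonneg _ _ hm
    _ ≤ D ^ m * (2 ^ m * (M ^ m + 1 ^ m)) := by
      gcongr
      exact add_rpow_le_two_rpow_mul_add_rpow hm M 1
    _ = (2 * D) ^ m * (M ^ m + 1) := by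
      rw [ENNReal.one_rpow, ENNReal.mul_rpow_of_nonneg _ _ hm]
      ring

lemma lintegral_heatFlow_caloricMajorant_rpow_le {a b m t : ℝ} (ha : 0 < a) (ha1 : a ≤ 1)
    (hm : 0 ≤ m) (hb : b ≤ m + a) {D : ℝ≥0∞} (hD1 : 1 ≤ D) (hD : D ≠ ⊤)
    {F : E → ℝ≥0∞} (hF : Measurable F)
    (hfin : ∀ s, 0 < s → essSup (heatFlow s F) volume ≠ ⊤) (x : E) :
    ∫⁻ s in Set.Ioo 0 t, heatFlow (t - s) (fun y => caloricMajorant D F y s ^ b) x ≤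
      ∫⁻ s in Set.Ioo 0 t, (2 * D) ^ m * (essSup (heatFlow s F) volume ^ m + 1) *
        caloricMajorant D F x t ^ a := by
  refine setLIntegral_mono' measurableSet_Ioo fun s ⟨hs, hst⟩ => ?_
  have sup_ne_top : D * (essSup (heatFlow s F) volume + 1) ≠ ⊤ :=
    ENNReal.mul_ne_top hD (ENNReal.add_ne_top.2 ⟨hfin s hs, ENNReal.one_ne_top⟩)
  calc heatFlow (t - s) (fun y => caloricMajorant D F y s ^ b) x
      ≤ (D * (essSup (heatFlow s F) volume + 1)) ^ m *
          heatFlow (t - s) (fun y => caloricMajorant D F y s) x ^ a :=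
        heatFlow_rpow_le_mul_rpow ha ha1 hm hb (sub_pos.2 hst)
          (measurable_caloricMajorant D hF s) sup_ne_top
          (fun y => one_le_caloricMajorant hD1 F y s) (caloricMajorant_le_essSup D F s) x
    _ ≤ _ := by
      rw [heatFlow_caloricMajorant hD hF hs hst]
      gcongr
      exact mul_add_one_rpow_le hm _ _

lemma duhamel_caloricMajorant_rpow_le {a b m T : ℝ} (ha : 0 < a) (ha1 : a ≤ 1) (hm : 0 ≤ m)
    (hb : b ≤ m + a) {D : ℝ≥0∞} (hDa : 2 ≤ D ^ a) (hD : D ≠ ⊤)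
    {f F : E → ℝ≥0∞} (hF : Measurable F) (hfF : ∀ y, f y ≤ F y ^ a)
    (hfin : ∀ s, 0 < s → essSup (heatFlow s F) volume ≠ ⊤)
    (hsmall : (2 * D) ^ m *
      ∫⁻ s in Set.Ioo 0 T, (essSup (heatFlow s F) volume ^ m + 1) ≤ 2⁻¹)
    {t : ℝ} (ht : t ∈ Set.Ioc 0 T) (x : E) :
    duhamel f (fun y s => caloricMajorant D F y s ^ b) x t ≤ caloricMajorant D F x t ^ a := by
  have hD1 : 1 ≤ D := one_le_of_one_le_rpow ha (one_le_two.trans hDa)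
  set W := caloricMajorant D F x t ^ a
  by_cases hW : W = ⊤
  · exact hW ▸ le_top
  have hpow : (2 * D) ^ m ≠ ⊤ :=
    ENNReal.rpow_ne_top_of_nonneg hm (ENNReal.mul_ne_top ENNReal.ofNat_ne_top hD)
  have source_le : ∫⁻ s in Set.Ioo 0 t,
      heatFlow (t - s) (fun y => caloricMajorant D F y s ^ b) x ≤ 2⁻¹ * W :=
    calc _ ≤ ∫⁻ s in Set.Ioo 0 t, (2 * D) ^ m * (essSup (heatFlow s F) volume ^ m + 1) * W :=
          lintegral_heatFlow_caloricMajorant_rpow_le ha ha1 hm hb hD1 hD hF hfin x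
      _ = (2 * D) ^ m * (∫⁻ s in Set.Ioo 0 t, (essSup (heatFlow s F) volume ^ m + 1)) * W := by
        rw [lintegral_mul_const' _ _ hW, lintegral_const_mul' _ _ hpow]
      _ ≤ (2 * D) ^ m * (∫⁻ s in Set.Ioo 0 T, (essSup (heatFlow s F) volume ^ m + 1)) * W := by
        gcongr
        exact ht.2
      _ ≤ 2⁻¹ * W := by gcongr
  calc duhamel f (fun y s => caloricMajorant D F y s ^ b) x t ≤ 2⁻¹ * W + 2⁻¹ * W :=
        add_le_add (heatFlow_le_half_caloricMajorant_rpow ha ha1 ht.1 hDa hF hfF x) source_le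
    _ = W := by rw [← add_mul, ENNReal.inv_two_add_inv_two, one_mul]

lemma picardLimit_rpow_le_caloricMajorant {p q r₁ r₂ m T : ℝ} (hp : 0 ≤ p) (hq : 0 ≤ q)
    (hr₁ : 1 ≤ r₁) (hr₂ : 1 ≤ r₂) (hm : 0 ≤ m)
    (hpm : p / r₂ - 1 / r₁ ≤ m) (hqm : q / r₁ - 1 / r₂ ≤ m)
    {D : ℝ≥0∞} (hDr₁ : 2 ≤ D ^ (1 / r₁)) (hDr₂ : 2 ≤ D ^ (1 / r₂)) (hD : D ≠ ⊤)
    {f g F : E → ℝ≥0∞} (hF : Measurable F) (hfF : ∀ y, f y ≤ F y ^ (1 / r₁))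
    (hgF : ∀ y, g y ≤ F y ^ (1 / r₂))
    (hfin : ∀ s, 0 < s → essSup (heatFlow s F) volume ≠ ⊤)
    (hsmall : (2 * D) ^ m *
      ∫⁻ s in Set.Ioo 0 T, (essSup (heatFlow s F) volume ^ m + 1) ≤ 2⁻¹)
    {t : ℝ} (ht : t ∈ Set.Ioc 0 T) (x : E) :
    picardLimit p q f g x t ^ r₁ ≤ caloricMajorant D F x t := by
  have hr₁0 : 0 < r₁ := by positivity
  have super {k r ρ : ℝ} {φ : E → ℝ≥0∞} (hr : 1 ≤ r) (hk : k / ρ - 1 / r ≤ m)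
      (hDr : 2 ≤ D ^ (1 / r)) (hφF : ∀ y, φ y ≤ F y ^ (1 / r)) :
      ∀ t ∈ Set.Ioc 0 T, ∀ x, duhamel φ (fun y s => (caloricMajorant D F y s ^ (1 / ρ)) ^ k) x t ≤
        caloricMajorant D F x t ^ (1 / r) := by
    intro t ht x
    simp only [← ENNReal.rpow_mul, one_div_mul_eq_div]
    exact duhamel_caloricMajorant_rpow_le (by positivity) (div_le_one_of_le₀ hr (by positivity)) hm
      (sub_le_iff_le_add.1 hk) hDr hD hF hφF hfin hsmall ht x
  rw [← ENNReal.le_rpow_inv_iff hr₁0, ← one_div]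
  exact iSup_le fun n => picardIterate_le_of_supersolution hp hq
    (super hr₁ hpm hDr₁ hfF) (super hr₂ hqm hDr₂ hgF) n ht x

end Supersolution

section RealValued

variable {N : ℕ}

lemma heatS_eq_heatFlow (t : ℝ) {φ : Euc N → ℝ} (hφ : ∀ y, 0 ≤ φ y) :
    heatS N t φ = heatFlow t fun y => ENNReal.ofReal (φ y) := by
  ext x
  simp only [heatS, heatFlow, heatKernel, finrank_euclideanSpace_fin, ENNReal.ofReal_mul' (hφ _)]

lemma heatS_add_lintegral_heatS_toReal_rpow {k t : ℝ} (hk : 0 ≤ k) {φ : Euc N → ℝ}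
    (hφ : ∀ y, 0 ≤ φ y) {Z : Euc N → ℝ → ℝ≥0∞}
    (hZ : ∀ s ∈ Set.Ioo 0 t, ∀ᵐ y, Z y s ≠ ⊤) (x : Euc N) :
    heatS N t φ x + ∫⁻ s in Set.Ioo 0 t, heatS N (t - s) (fun y => (Z y s).toReal ^ k) x =
      duhamel (fun y => ENNReal.ofReal (φ y)) (fun y s => Z y s ^ k) x t := by
  rw [duhamel, heatS_eq_heatFlow t hφ]
  congr 1
  refine setLIntegral_congr_fun measurableSet_Ioo fun s hs => ?_
  simp only [heatS_eq_heatFlow _ fun y => Real.rpow_nonneg (ENNReal.toReal_nonneg (a := Z y s)) k]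
  refine heatFlow_congr_ae _ ?_ x
  filter_upwards [hZ s hs] with y hy
  rw [← ENNReal.ofReal_rpow_of_nonneg ENNReal.toReal_nonneg hk, ENNReal.ofReal_toReal hy]

lemma duhamelSys_toReal_picardLimit {p q t : ℝ} (hp : 0 ≤ p) (hq : 0 ≤ q) {u₀ v₀ : Euc N → ℝ}
    (hu₀m : Measurable u₀) (hv₀m : Measurable v₀) (hu₀ : ∀ x, 0 ≤ u₀ x) (hv₀ : ∀ x, 0 ≤ v₀ x)
    {f g : Euc N → ℝ≥0∞} (hf : f = fun y => ENNReal.ofReal (u₀ y))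
    (hg : g = fun y => ENNReal.ofReal (v₀ y))
    (ht : 0 < t) (hU : ∀ s ∈ Set.Ioc 0 t, ∀ᵐ y, picardLimit p q f g y s ≠ ⊤)
    (hV : ∀ s ∈ Set.Ioc 0 t, ∀ᵐ y, picardLimit q p g f y s ≠ ⊤) :
    DuhamelSys N p q u₀ v₀ (fun x s => (picardLimit p q f g x s).toReal)
      (fun x s => (picardLimit q p g f x s).toReal) t := by
  subst hf hg
  have htt : t ∈ Set.Ioc 0 t := ⟨ht, le_rfl⟩
  constructor
  · filter_upwards [hU t htt] with x hx
    rw [ENNReal.ofReal_toReal hx, heatS_add_lintegral_heatS_toReal_rpow hp hu₀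
      fun s hs => hV s ⟨hs.1, hs.2.le⟩]
    exact picardLimit_eq_duhamel hp hq hu₀m.ennreal_ofReal hv₀m.ennreal_ofReal x t
  · filter_upwards [hV t htt] with x hx
    rw [ENNReal.ofReal_toReal hx, heatS_add_lintegral_heatS_toReal_rpow hq hv₀
      fun s hs => hU s ⟨hs.1, hs.2.le⟩]
    exact picardLimit_eq_duhamel hq hp hv₀m.ennreal_ofReal hu₀m.ennreal_ofReal x t

theorem exists_solution_of_mul_setLIntegral_le_half {p q r₁ r₂ m T : ℝ} (hp : 0 ≤ p) (hq : 0 ≤ q)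
    (hr₁ : 1 ≤ r₁) (hr₂ : 1 ≤ r₂) (hm : 0 ≤ m)
    (hpm : p / r₂ - 1 / r₁ ≤ m) (hqm : q / r₁ - 1 / r₂ ≤ m)
    {D : ℝ≥0∞} (hDr₁ : 2 ≤ D ^ (1 / r₁)) (hDr₂ : 2 ≤ D ^ (1 / r₂)) (hD : D ≠ ⊤)
    {u₀ v₀ : Euc N → ℝ} (hu₀m : Measurable u₀) (hv₀m : Measurable v₀)
    (hu₀ : ∀ x, 0 ≤ u₀ x) (hv₀ : ∀ x, 0 ≤ v₀ x)
    (hfin : ∀ s, 0 < s → heatSup N s (fun y => u₀ y ^ r₁ + v₀ y ^ r₂) ≠ ⊤)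
    (hsmall : (2 * D) ^ m *
      ∫⁻ s in Set.Ioo 0 T, (heatSup N s (fun y => u₀ y ^ r₁ + v₀ y ^ r₂) ^ m + 1) ≤ 2⁻¹) :
    ∃ u v : Euc N → ℝ → ℝ, (∀ x t, 0 ≤ u x t) ∧ (∀ x t, 0 ≤ v x t) ∧
      Measurable (Function.uncurry u) ∧ Measurable (Function.uncurry v) ∧
      ∀ t ∈ Set.Ioc 0 T, DuhamelSys N p q u₀ v₀ u v t ∧
        ∀ x, ENNReal.ofReal (u x t ^ r₁ + v x t ^ r₂) ≤
          2 * (D * (heatS N t (fun y => u₀ y ^ r₁ + v₀ y ^ r₂) x + 1)) := by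
  have hr₁0 : 0 < r₁ := by positivity
  have hr₂0 : 0 < r₂ := by positivity
  have hu₀r (y : Euc N) : 0 ≤ u₀ y ^ r₁ := Real.rpow_nonneg (hu₀ y) r₁
  have hv₀r (y : Euc N) : 0 ≤ v₀ y ^ r₂ := Real.rpow_nonneg (hv₀ y) r₂
  let f : Euc N → ℝ≥0∞ := fun y => ENNReal.ofReal (u₀ y)
  let g : Euc N → ℝ≥0∞ := fun y => ENNReal.ofReal (v₀ y)
  let F : Euc N → ℝ≥0∞ := fun y => ENNReal.ofReal (u₀ y ^ r₁ + v₀ y ^ r₂)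
  have hf : Measurable f := hu₀m.ennreal_ofReal
  have hg : Measurable g := hv₀m.ennreal_ofReal
  have hF : Measurable F := ((hu₀m.pow_const r₁).add (hv₀m.pow_const r₂)).ennreal_ofReal
  have hfF (y) : f y ≤ F y ^ (1 / r₁) :=
    ofReal_le_ofReal_rpow_one_div hr₁0 (hu₀ y) (le_add_of_nonneg_right (hv₀r y))
  have hgF (y) : g y ≤ F y ^ (1 / r₂) :=
    ofReal_le_ofReal_rpow_one_div hr₂0 (hv₀ y) (le_add_of_nonneg_left (hu₀r y))
  simp only [heatSup, heatS_eq_heatFlow _ fun y => add_nonneg (hu₀r y) (hv₀r y)] at hfin hsmall ⊢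
  have hU {t} (ht : t ∈ Set.Ioc 0 T) (x : Euc N) :=
    picardLimit_rpow_le_caloricMajorant hp hq hr₁ hr₂ hm hpm hqm hDr₁ hDr₂ hD hF hfF hgF hfin
      hsmall ht x
  have hV {t} (ht : t ∈ Set.Ioc 0 T) (x : Euc N) :=
    picardLimit_rpow_le_caloricMajorant hq hp hr₂ hr₁ hm hqm hpm hDr₂ hDr₁ hD hF hgF hfF hfin
      hsmall ht x
  refine ⟨fun x t => (picardLimit p q f g x t).toReal, fun x t => (picardLimit q p g f x t).toReal,
    fun _ _ => ENNReal.toReal_nonneg, fun _ _ => ENNReal.toReal_nonneg,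
    (measurable_picardLimit p q hf hg).ennreal_toReal,
    (measurable_picardLimit q p hg hf).ennreal_toReal, fun t ht => ⟨?_, fun x => ?_⟩⟩
  · exact duhamelSys_toReal_picardLimit hp hq hu₀m hv₀m hu₀ hv₀ rfl rfl ht.1
      (fun s hs => ae_ne_top_of_rpow_le_caloricMajorant hr₁0 hD (hfin s hs.1)
        (hU ⟨hs.1, hs.2.trans ht.2⟩))
      (fun s hs => ae_ne_top_of_rpow_le_caloricMajorant hr₂0 hD (hfin s hs.1)
        (hV ⟨hs.1, hs.2.trans ht.2⟩))
  · exact ofReal_toReal_rpow_add_toReal_rpow_le_two_mul hr₁0.le hr₂0.le (hU ht x) (hV ht x)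

end RealValued

theorem statement10_general (N : ℕ) (p q r₁ r₂ m : ℝ) (hp : 0 ≤ p) (hq : 0 ≤ q)
    (hr₁ : 1 ≤ r₁) (hr₂ : 1 ≤ r₂) (hm : 0 ≤ m)
    (hpm : p / r₂ - 1 / r₁ ≤ m) (hqm : q / r₁ - 1 / r₂ ≤ m) :
    ∃ γ₃ T₂ C : ℝ, 0 < γ₃ ∧ 0 < T₂ ∧ 0 < C ∧
      ∀ u₀ v₀ : Euc N → ℝ, Measurable u₀ → Measurable v₀ →
        (∀ x, 0 ≤ u₀ x) → (∀ x, 0 ≤ v₀ x) →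
        (∀ t : ℝ, 0 < t → heatSup N t (fun y => u₀ y ^ r₁ + v₀ y ^ r₂) < ⊤) →
        ∀ T : ℝ,
          (∫⁻ s in Set.Ioo 0 T, heatSup N s (fun y => u₀ y ^ r₁ + v₀ y ^ r₂) ^ m) ≤
            ENNReal.ofReal γ₃ →
          ∃ u v : Euc N → ℝ → ℝ,
            (∀ x t, 0 ≤ u x t) ∧ (∀ x t, 0 ≤ v x t) ∧
            Measurable (Function.uncurry u) ∧ Measurable (Function.uncurry v) ∧
            ∀ t : ℝ, 0 < t → t ≤ min T T₂ →
              DuhamelSys N p q u₀ v₀ u v t ∧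
              ∀ᵐ x ∂(volume : Measure (Euc N)),
                ENNReal.ofReal (u x t ^ r₁ + v x t ^ r₂) ≤
                  ENNReal.ofReal C * heatS N t (fun y => u₀ y ^ r₁ + v₀ y ^ r₂) x +
                    ENNReal.ofReal C := by
  let d : ℝ := 2 ^ (r₁ + r₂)
  let A : ℝ := (2 * d) ^ m
  have hDr₁ := two_le_ofReal_two_rpow_rpow_one_div (r := r₁) (c := r₁ + r₂)
    (by positivity) (by linarith)
  have hDr₂ := two_le_ofReal_two_rpow_rpow_one_div (r := r₂) (c := r₁ + r₂)
    (by positivity) (by linarith)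
  have ofReal_two_mul_d : ENNReal.ofReal (2 * d) = 2 * ENNReal.ofReal d := by
    rw [ENNReal.ofReal_mul zero_le_two, ENNReal.ofReal_ofNat]
  refine ⟨A⁻¹ / 4, A⁻¹ / 4, 2 * d, by positivity, by positivity, by positivity,
    fun u₀ v₀ hu₀m hv₀m hu₀ hv₀ hfin T hT => ?_⟩
  have hsmall := ofReal_mul_setLIntegral_add_one_le_half (by positivity) hT
  rw [← ENNReal.ofReal_rpow_of_pos (by positivity), ofReal_two_mul_d] at hsmall
  obtain ⟨u, v, hu, hv, hum, hvm, sol⟩ := exists_solution_of_mul_setLIntegral_le_half hp hq hr₁ hr₂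
    hm hpm hqm hDr₁ hDr₂ ENNReal.ofReal_ne_top hu₀m hv₀m hu₀ hv₀ (fun s hs => (hfin s hs).ne) hsmall
  refine ⟨u, v, hu, hv, hum, hvm, fun t ht0 htT => ?_⟩
  obtain ⟨sol_duhamel, sol_le⟩ := sol t ⟨ht0, htT⟩
  refine ⟨sol_duhamel, ae_of_all _ fun x => (sol_le x).trans_eq ?_⟩
  rw [← mul_assoc, ofReal_two_mul_d, mul_add_one]

/-- Theorem 3.1 (iii), first part: if `max{P,Q} > 0` there are
`γ₃, T₂, C > 0` such that `∫₀^T ‖S(s)W₀‖_∞^{max{P,Q}/N} ds ≤ γ₃` for some `T > 0` implies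
the existence of a solution of (S) on `ℝ^N × (0, min{T,T₂}]` with
`0 ≤ u^{r₁} + v^{r₂} ≤ C S(t)W₀ + C`. -/
theorem statement10 (N : ℕ) (hN : 1 ≤ N) (p q r₁ r₂ : ℝ) (hp : 0 ≤ p) (hq : 0 ≤ q)
    (hr₁ : 1 ≤ r₁) (hr₂ : 1 ≤ r₂) (P Q : ℝ)
    (hP : P = (N : ℝ) * (p / r₂ - 1 / r₁)) (hQ : Q = (N : ℝ) * (q / r₁ - 1 / r₂))
    (hPQpos : 0 < max P Q) :
    ∃ γ₃ T₂ C : ℝ, 0 < γ₃ ∧ 0 < T₂ ∧ 0 < C ∧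
      ∀ u₀ v₀ : Euc N → ℝ, Measurable u₀ → Measurable v₀ →
        (∀ x, 0 ≤ u₀ x) → (∀ x, 0 ≤ v₀ x) →
        (∀ t : ℝ, 0 < t → heatSup N t (fun y => u₀ y ^ r₁ + v₀ y ^ r₂) < ⊤) →
        ∀ T : ℝ, 0 < T →
          (∫⁻ s in Set.Ioo 0 T,
              heatSup N s (fun y => u₀ y ^ r₁ + v₀ y ^ r₂) ^ (max P Q / (N : ℝ))) ≤
            ENNReal.ofReal γ₃ →
          ∃ u v : Euc N → ℝ → ℝ,
            (∀ x t, 0 ≤ u x t) ∧ (∀ x t, 0 ≤ v x t) ∧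
            Measurable (Function.uncurry u) ∧ Measurable (Function.uncurry v) ∧
            ∀ t : ℝ, 0 < t → t ≤ min T T₂ →
              DuhamelSys N p q u₀ v₀ u v t ∧
              ∀ᵐ x ∂(volume : Measure (Euc N)),
                ENNReal.ofReal (u x t ^ r₁ + v x t ^ r₂) ≤
                  ENNReal.ofReal C * heatS N t (fun y => u₀ y ^ r₁ + v₀ y ^ r₂) x +
                    ENNReal.ofReal C := by
  have hN₀ : (0 : ℝ) < N := by exact_mod_cast hN
  have hpm : p / r₂ - 1 / r₁ ≤ max P Q / N := (le_div_iff₀' hN₀).2 (hP ▸ le_max_left P Q)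
  have hqm : q / r₁ - 1 / r₂ ≤ max P Q / N := (le_div_iff₀' hN₀).2 (hQ ▸ le_max_right P Q)
  obtain ⟨γ₃, T₂, C, hγ₃, hT₂, hC, exists_solution⟩ :=
    statement10_general N p q r₁ r₂ (max P Q / N) hp hq hr₁ hr₂ (by positivity) hpm hqm
  exact ⟨γ₃, T₂, C, hγ₃, hT₂, hC, fun u₀ v₀ hu₀m hv₀m hu₀ hv₀ hfin T _ =>
    exists_solution u₀ v₀ hu₀m hv₀m hu₀ hv₀ hfin T⟩
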